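/- Suppose Θ = {θ_1, θ_2}, each edge cost function ℓ̃_e^θ : ℝ² → ℝ is continuously differentiable, and for all paths p_1, p_2 ∈ P and every flow f ∈ ℝ^{|P|·2}, Σ_{e ∈ p_1 ∩ p_2} [ ∂_1 ℓ̃_e^{θ_2}(φ_e^{θ_1}(f), φ_e^{θ_2}(f)) − ∂_2 ℓ̃_e^{θ_1}(φ_e^{θ_1}(f), φ_e^{θ_2}(f)) ] = 0. Then the function V(f) = Σ_{e∈E} [ ∫_0^{φ_e^{θ_1}(f)} ℓ̃_e^{θ_1}(u_1, φ_e^{θ_2}(f)) du_1 + ∫_0^{φ_e^{θ_2}(f)} ℓ̃_e^{θ_2}(φ_e^{θ_1}(f), u_2) du_2 − ∫_0^{φ_e^{θ_2}(f)} ∫_0^{φ_e^{θ_1}(f)} ∂_2 ℓ̃_e^{θ_1}(u_1, u_2) du_1 du_2 ] satisfies, for every path p ∈ P and every flow f, that its partial derivative with respect to the path flow f_p^{θ_1} equals Σ_{e∈p} ℓ̃_e^{θ_1}(φ_e^{θ_1}(f), φ_e^{θ_2}(f)). -/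

import Mathlib

/-!
Write `c_e = ∂₁ℓ₂ - ∂₂ℓ₁` on edge `e`. The fundamental theorem of calculus and differentiation
under the integral sign (`hasDerivAt_edgeTerm`) show that the summand of `Vpot` at `e` has
derivative `ℓ₁(x, y) + ∫_0^y c_e(x, u) du` with respect to its type-1 edge flow `x`, where `y` is
the type-2 edge flow. Changing `f_p^{θ₁}` moves the edge flow of `e` at rate one if `e ∈ p` and
not at all otherwise, so it remains to prove `∑_{e ∈ p} ∫_0^{φ_e(h)} c_e(φ_e(g), u) du = 0`
(`sum_integral_eq_zero`). For this, integrate along the ray `s ↦ s • h`: since edge flows are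
linear, the substitution `u = s φ_e(h)` turns the sum into
`∫_0^1 ∑_{e ∈ p} φ_e(h) c_e(φ_e(g), φ_e(s • h)) ds`, and expanding `φ_e(h) = ∑_{q ∋ e} h_q` turns
the integrand into `∑_q h_q ∑_{e ∈ p ∩ q} c_e(φ_e(g), φ_e(s • h))`, whose inner sums vanish by the
symmetry condition.
-/

open MeasureTheory

noncomputable section

namespace RoutingGame

open scoped Classical

variable {E P : Type*}

/-- Edge flow of one type on edge `e` induced by the path flows `g` of that type:
`φ_e = ∑_{p ∈ P : e ∈ p} g_p`. -/
def edgeFlow [Fintype P] (edges : P → Finset E) (g : P → ℝ) (e : E) : ℝ :=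
  ∑ p ∈ Finset.univ.filter (fun p => e ∈ edges p), g p

/-- Utility of player 1 (type `θ₁`) in the abstract game:
`U₁(g,h) = ∑_e ∫_0^{φ_e^{θ₁}} ℓ̃_e^{θ₁}(u, φ_e^{θ₂}) du`. -/
def U1 [Fintype E] [Fintype P] (edges : P → Finset E) (ℓ1 : E → ℝ → ℝ → ℝ)
    (g h : P → ℝ) : ℝ :=
  ∑ e : E, ∫ u in (0:ℝ)..(edgeFlow edges g e), ℓ1 e u (edgeFlow edges h e)

/-- Utility of player 2 (type `θ₂`) in the abstract game:
`U₂(g,h) = ∑_e ∫_0^{φ_e^{θ₂}} ℓ̃_e^{θ₂}(φ_e^{θ₁}, u) du`. -/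
def U2 [Fintype E] [Fintype P] (edges : P → Finset E) (ℓ2 : E → ℝ → ℝ → ℝ)
    (g h : P → ℝ) : ℝ :=
  ∑ e : E, ∫ u in (0:ℝ)..(edgeFlow edges h e), ℓ2 e (edgeFlow edges g e) u

/-- `V` is a potential function for the two-player abstract game associated with
edge cost functions `ℓ1, ℓ2` (arguments of `V`: path flows of type `θ₁`, of type `θ₂`). -/
def IsPotential [Fintype E] [Fintype P] (edges : P → Finset E)
    (ℓ1 ℓ2 : E → ℝ → ℝ → ℝ) (V : (P → ℝ) → (P → ℝ) → ℝ) : Prop :=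
  (∀ g g' h : P → ℝ, V g h - V g' h = U1 edges ℓ1 g h - U1 edges ℓ1 g' h) ∧
  (∀ g h h' : P → ℝ, V g h - V g h' = U2 edges ℓ2 g h - U2 edges ℓ2 g h')

/-- The candidate potential function
`V(f) = ∑_e [∫_0^{φ₁} ℓ₁(u,φ₂) du + ∫_0^{φ₂} ℓ₂(φ₁,u) du − ∫_0^{φ₂}∫_0^{φ₁} ∂₂ℓ₁(u₁,u₂) du₁ du₂]`. -/
def Vpot [Fintype E] [Fintype P] (edges : P → Finset E)
    (ℓ1 ℓ2 : E → ℝ → ℝ → ℝ) (g h : P → ℝ) : ℝ :=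
  ∑ e : E,
    ((∫ u in (0:ℝ)..(edgeFlow edges g e), ℓ1 e u (edgeFlow edges h e)) +
     (∫ u in (0:ℝ)..(edgeFlow edges h e), ℓ2 e (edgeFlow edges g e) u) -
     ∫ u2 in (0:ℝ)..(edgeFlow edges h e),
       ∫ u1 in (0:ℝ)..(edgeFlow edges g e), deriv (fun t => ℓ1 e u1 t) u2)

/-- Differentiation under the integral sign for a jointly continuous `x`-derivative: on the compact
set `[x₀ - 1, x₀ + 1] × [0, b]` that derivative is bounded by a constant, which dominates. -/
theorem hasDerivAt_integral_param {F F' : ℝ → ℝ → ℝ} (b x₀ : ℝ)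
    (hF : ∀ x, Continuous (F x)) (hF' : Continuous (Function.uncurry F'))
    (hd : ∀ x u, HasDerivAt (fun x => F x u) (F' x u) x) :
    HasDerivAt (fun x => ∫ u in (0:ℝ)..b, F x u) (∫ u in (0:ℝ)..b, F' x₀ u) x₀ := by
  obtain ⟨C, hC⟩ := ((isCompact_closedBall x₀ 1).prod
    (isCompact_uIcc (a := (0:ℝ)) (b := b))).exists_bound_of_continuousOn hF'.continuousOn
  have hF'x : Continuous (F' x₀) := hF'.comp (by fun_prop : Continuous fun u => (x₀, u))
  refine (intervalIntegral.hasDerivAt_integral_of_dominated_loc_of_deriv_le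
    (F := F) (F' := F') (bound := fun _ => C)
    (Metric.closedBall_mem_nhds x₀ one_pos)
    (Filter.Eventually.of_forall fun x => (hF x).aestronglyMeasurable)
    ((hF x₀).intervalIntegrable _ _) hF'x.aestronglyMeasurable
    (Filter.Eventually.of_forall fun u hu x hx => ?_)
    intervalIntegrable_const
    (Filter.Eventually.of_forall fun u _ x _ => hd x u)).2
  exact hC (x, u) ⟨hx, Set.uIoc_subset_uIcc hu⟩

theorem hasDerivAt_fst {f : ℝ → ℝ → ℝ} (hf : ContDiff ℝ 1 (fun q : ℝ × ℝ => f q.1 q.2))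
    (x y : ℝ) : HasDerivAt (fun t => f t y) (deriv (fun t => f t y) x) x := by
  have h : ContDiff ℝ 1 (fun t => f t y) :=
    hf.comp (by fun_prop : ContDiff ℝ 1 fun t : ℝ => (t, y))
  exact (h.differentiable one_ne_zero x).hasDerivAt

theorem continuous_deriv_fst {f : ℝ → ℝ → ℝ} (hf : ContDiff ℝ 1 (fun q : ℝ × ℝ => f q.1 q.2)) :
    Continuous (fun q : ℝ × ℝ => deriv (fun t => f t q.2) q.1) := by
  have h : ∀ q : ℝ × ℝ, deriv (fun t => f t q.2) q.1
      = fderiv ℝ (fun q : ℝ × ℝ => f q.1 q.2) q (1, 0) := by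
    intro q
    have h1 := (hf.differentiable one_ne_zero q).hasFDerivAt
    have h2 : HasDerivAt (fun t : ℝ => (t, q.2)) ((1:ℝ), (0:ℝ)) q.1 :=
      (hasDerivAt_id q.1).prodMk (hasDerivAt_const q.1 q.2)
    exact (h1.comp_hasDerivAt q.1 h2).deriv
  simp_rw [h]
  exact (hf.continuous_fderiv one_ne_zero).clm_apply continuous_const

theorem continuous_deriv_snd {f : ℝ → ℝ → ℝ} (hf : ContDiff ℝ 1 (fun q : ℝ × ℝ => f q.1 q.2)) :
    Continuous (fun q : ℝ × ℝ => deriv (fun t => f q.1 t) q.2) := by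
  have h : ContDiff ℝ 1 (fun q : ℝ × ℝ => f q.2 q.1) :=
    hf.comp (by fun_prop : ContDiff ℝ 1 fun q : ℝ × ℝ => (q.2, q.1))
  exact (continuous_deriv_fst (f := fun a b => f b a) h).comp continuous_swap

/-- The summand of `Vpot` at one edge, differentiated in the type-1 edge flow. -/
theorem hasDerivAt_edgeTerm {l1 l2 : ℝ → ℝ → ℝ}
    (h1 : ContDiff ℝ 1 (fun q : ℝ × ℝ => l1 q.1 q.2))
    (h2 : ContDiff ℝ 1 (fun q : ℝ × ℝ => l2 q.1 q.2)) (x y : ℝ) :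
    HasDerivAt (fun x => (∫ u in (0:ℝ)..x, l1 u y) + (∫ u in (0:ℝ)..y, l2 x u) -
        ∫ u2 in (0:ℝ)..y, ∫ u1 in (0:ℝ)..x, deriv (fun t => l1 u1 t) u2)
      (l1 x y + ∫ u in (0:ℝ)..y, (deriv (fun t => l2 t u) x - deriv (fun t => l1 x t) u)) x := by
  have c1 : Continuous (fun u => l1 u y) :=
    h1.continuous.comp (by fun_prop : Continuous fun u : ℝ => (u, y))
  have d1 := continuous_deriv_snd h1
  have d2 := continuous_deriv_fst h2
  have A : HasDerivAt (fun x => ∫ u in (0:ℝ)..x, l1 u y) (l1 x y) x :=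
    intervalIntegral.integral_hasDerivAt_right (c1.intervalIntegrable _ _)
      (c1.stronglyMeasurableAtFilter _ _) c1.continuousAt
  have B : HasDerivAt (fun x => ∫ u in (0:ℝ)..y, l2 x u)
      (∫ u in (0:ℝ)..y, deriv (fun t => l2 t u) x) x :=
    hasDerivAt_integral_param (F' := fun x u => deriv (fun t => l2 t u) x) y x
      (fun x => h2.continuous.comp (by fun_prop : Continuous fun u : ℝ => (x, u))) d2
      (fun x u => hasDerivAt_fst h2 x u)
  have C : HasDerivAt (fun x => ∫ u2 in (0:ℝ)..y, ∫ u1 in (0:ℝ)..x, deriv (fun t => l1 u1 t) u2)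
      (∫ u in (0:ℝ)..y, deriv (fun t => l1 x t) u) x := by
    refine hasDerivAt_integral_param
      (F := fun x u2 => ∫ u1 in (0:ℝ)..x, deriv (fun t => l1 u1 t) u2)
      (F' := fun x u => deriv (fun t => l1 x t) u) y x (fun x => ?_) d1 (fun x u => ?_)
    · exact intervalIntegral.continuous_parametric_intervalIntegral_of_continuous'
        (f := fun u2 u1 => deriv (fun t => l1 u1 t) u2) (d1.comp continuous_swap) 0 x
    · have c : Continuous (fun u1 => deriv (fun t => l1 u1 t) u) :=
        d1.comp (by fun_prop : Continuous fun u1 : ℝ => (u1, u))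
      exact intervalIntegral.integral_hasDerivAt_right (c.intervalIntegrable _ _)
        (c.stronglyMeasurableAtFilter _ _) c.continuousAt
  have c2 : Continuous (fun u => deriv (fun t => l2 t u) x) :=
    d2.comp (by fun_prop : Continuous fun u : ℝ => (x, u))
  have c3 : Continuous (fun u => deriv (fun t => l1 x t) u) :=
    d1.comp (by fun_prop : Continuous fun u : ℝ => (x, u))
  rw [intervalIntegral.integral_sub (c2.intervalIntegrable _ _) (c3.intervalIntegrable _ _),
    ← add_sub_assoc]
  exact (A.add B).sub C

theorem edgeFlow_smul [Fintype P] (edges : P → Finset E) (s : ℝ) (h : P → ℝ) (e : E) :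
    edgeFlow edges (fun q => s * h q) e = edgeFlow edges h e * s := by
  rw [mul_comm, edgeFlow, edgeFlow, Finset.mul_sum]

theorem edgeFlow_update [Fintype P] [DecidableEq P] (edges : P → Finset E) (g : P → ℝ) (p : P)
    (t : ℝ) (e : E) :
    edgeFlow edges (Function.update g p t) e
      = edgeFlow edges g e + (if e ∈ edges p then t - g p else 0) := by
  have h : ∀ q, Function.update g p t q = g q + if q = p then t - g p else 0 := by
    intro q
    by_cases hq : q = p
    · subst hq; simp
    · simp [hq]
  simp only [edgeFlow, h, Finset.sum_add_distrib, Finset.sum_ite_eq', Finset.mem_filter,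
    Finset.mem_univ, true_and]

/-- If, along the ray `s ↦ s • h`, the sums of `c` over `edges p ∩ edges q` vanish for every path
`q`, then so does the sum over `p` of the integrals of `c` up to the edge flows of `h`. -/
theorem sum_integral_eq_zero [Fintype P] (edges : P → Finset E) (c : E → ℝ → ℝ)
    (hc : ∀ e, Continuous (c e)) (p : P) (h : P → ℝ)
    (hz : ∀ (q : P) (s : ℝ), ∑ e ∈ edges p ∩ edges q, c e (edgeFlow edges h e * s) = 0) :
    ∑ e ∈ edges p, ∫ u in (0:ℝ)..(edgeFlow edges h e), c e u = 0 := by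
  have hsub : ∀ e, ∫ u in (0:ℝ)..(edgeFlow edges h e), c e u
      = ∫ s in (0:ℝ)..1, edgeFlow edges h e * c e (edgeFlow edges h e * s) := by
    intro e
    rw [intervalIntegral.integral_const_mul, ← smul_eq_mul,
      intervalIntegral.smul_integral_comp_mul_left]
    simp
  simp_rw [hsub]
  have hcont : ∀ e, Continuous fun s : ℝ => edgeFlow edges h e * c e (edgeFlow edges h e * s) :=
    fun e => continuous_const.mul ((hc e).comp (continuous_const.mul continuous_id))
  rw [← intervalIntegral.integral_finsetSum fun e _ => (hcont e).intervalIntegrable _ _]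
  have hpt : ∀ s : ℝ, ∑ e ∈ edges p, edgeFlow edges h e * c e (edgeFlow edges h e * s) = 0 := by
    intro s
    calc ∑ e ∈ edges p, edgeFlow edges h e * c e (edgeFlow edges h e * s)
        = ∑ e ∈ edges p, ∑ q, if e ∈ edges q then h q * c e (edgeFlow edges h e * s) else 0 := by
          refine Finset.sum_congr rfl fun e _ => ?_
          rw [← Finset.sum_filter, ← Finset.sum_mul]
          rfl
      _ = ∑ q, h q * ∑ e ∈ edges p ∩ edges q, c e (edgeFlow edges h e * s) := by
          rw [Finset.sum_comm]
          refine Finset.sum_congr rfl fun q _ => ?_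
          rw [← Finset.sum_filter, Finset.filter_mem_eq_inter, Finset.mul_sum]
      _ = 0 := by simp [hz]
  simp [hpt]

/-- With two types, continuously differentiable edge cost functions and the symmetry
condition `∑_{e∈p₁∩p₂} [∂₁ℓ̃_e^{θ₂}(φ₁,φ₂) − ∂₂ℓ̃_e^{θ₁}(φ₁,φ₂)] = 0` for all paths and
flows, the partial derivative of `Vpot` with respect to the path flow `f_p^{θ₁}` equals
`∑_{e∈p} ℓ̃_e^{θ₁}(φ₁,φ₂)`. -/
theorem deriv_vpot_type1 {E P : Type*} [Fintype E] [Fintype P] [DecidableEq P]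
    (edges : P → Finset E) (ℓ1 ℓ2 : E → ℝ → ℝ → ℝ)
    (hℓ1 : ∀ e, ContDiff ℝ 1 (fun q : ℝ × ℝ => ℓ1 e q.1 q.2))
    (hℓ2 : ∀ e, ContDiff ℝ 1 (fun q : ℝ × ℝ => ℓ2 e q.1 q.2))
    (hsym : ∀ (p1 p2 : P) (g h : P → ℝ),
      ∑ e ∈ edges p1 ∩ edges p2,
        (deriv (fun t => ℓ2 e t (edgeFlow edges h e)) (edgeFlow edges g e) -
         deriv (fun t => ℓ1 e (edgeFlow edges g e) t) (edgeFlow edges h e)) = 0) :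
    ∀ (p : P) (g h : P → ℝ),
      deriv (fun t => Vpot edges ℓ1 ℓ2 (Function.update g p t) h) (g p) =
        ∑ e ∈ edges p, ℓ1 e (edgeFlow edges g e) (edgeFlow edges h e) := by
  intro p g h
  have hx : ∀ e, HasDerivAt (fun t => edgeFlow edges (Function.update g p t) e)
      (if e ∈ edges p then 1 else 0) (g p) := by
    intro e
    simp only [edgeFlow_update]
    split_ifs
    · exact ((hasDerivAt_id (g p)).sub_const (g p)).const_add _
    · simpa using hasDerivAt_const (g p) (edgeFlow edges g e)
  have hV : HasDerivAt (fun t => Vpot edges ℓ1 ℓ2 (Function.update g p t) h)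
      (∑ e : E, (ℓ1 e (edgeFlow edges g e) (edgeFlow edges h e) +
        ∫ u in (0:ℝ)..(edgeFlow edges h e),
          (deriv (fun t => ℓ2 e t u) (edgeFlow edges g e) -
           deriv (fun t => ℓ1 e (edgeFlow edges g e) t) u)) *
        (if e ∈ edges p then 1 else 0)) (g p) := by
    unfold Vpot
    refine HasDerivAt.fun_sum fun e _ => ?_
    have hE := hasDerivAt_edgeTerm (hℓ1 e) (hℓ2 e) (edgeFlow edges g e) (edgeFlow edges h e)
    exact HasDerivAt.comp_of_eq (g p) hE (hx e) (by simp)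
  have hzero := sum_integral_eq_zero edges
    (fun e u => deriv (fun t => ℓ2 e t u) (edgeFlow edges g e) -
      deriv (fun t => ℓ1 e (edgeFlow edges g e) t) u)
    (fun e => by
      have hpair : Continuous fun u : ℝ => (edgeFlow edges g e, u) := by fun_prop
      exact ((continuous_deriv_fst (hℓ2 e)).comp hpair).sub
        ((continuous_deriv_snd (hℓ1 e)).comp hpair)) p h
    (fun q s => by simpa only [edgeFlow_smul] using hsym p q g (fun r => s * h r))
  rw [hV.deriv]
  simp only [mul_ite, mul_one, mul_zero, Finset.sum_ite_mem, Finset.univ_inter,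
    Finset.sum_add_distrib]
  rw [hzero, add_zero]

end RoutingGame
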